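/- Let (P', λ') ∈ P_d × (0,1) with P' in general position. Then there exist ε > 0 and an integer k ≥ 1, N > 0 and C > 0 (depending only on ε) such that for every n > N, every itinerary i ∈ I_n^ε and every j ∈ {1, …, d}: Leb{(P,λ) ∈ Δ_ε : H(P,λ,i) lies within distance ρ_n of the line L_j(P)} ≤ C · n^{2(k+1)} · ρ_n^{1/k}, where ρ_n := 2 r_ε a_ε^n and L_j(P) is the line through the vertices v_j and v_{j+1} of P (indices mod d), and Leb denotes Lebesgue measure on ℂ^d × ℝ. -/

import Mathlib

open MeasureTheory Set Filter Metric

noncomputable section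

/-- Planar cross product of two complex numbers viewed as vectors of `ℝ²`. -/
def cross (z w : ℂ) : ℝ := z.re * w.im - z.im * w.re

/-- `v` is the tuple of vertices of a convex `d`-gon, cyclically ordered
(counterclockwise): every vertex lies strictly to the left of every directed edge. -/
def IsConvexPolygon {d : ℕ} [NeZero d] (v : Fin d → ℂ) : Prop :=
  ∀ i j : Fin d, j ≠ i → j ≠ i + 1 → 0 < cross (v (i + 1) - v i) (v j - v i)

/-- The polygon `P`, as a subset of the plane. -/
def polygonSet {d : ℕ} (v : Fin d → ℂ) : Set ℂ := convexHull ℝ (Set.range v)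

/-- The open cone `A k`: points `z` outside `P` whose supporting line (oriented from `z`
towards the polygon, with the interior of `P` on its left) meets `P` exactly at the
vertex `v k`. -/
def cone {d : ℕ} (v : Fin d → ℂ) (k : Fin d) : Set ℂ :=
  {z | ∀ j : Fin d, j ≠ k → 0 < cross (v k - z) (v j - z)}

/-- The singular set `S_P`: the points of `X = ℂ \ P` lying in no cone, i.e. whose
supporting line contains an edge of the polygon. -/
def singSet {d : ℕ} (v : Fin d → ℂ) : Set ℂ :=
  {z | z ∉ polygonSet v ∧ ∀ k : Fin d, z ∉ cone v k}

/-- The outer billiard map of the polygon with vertices `v` with contraction `lam`: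
on the cone `A k` it is `z ↦ -lam • z + (1+lam) • v k` (extended arbitrarily outside
the union of the cones, which is its actual domain `X \ S_P`). -/
def billiardMap {d : ℕ} (v : Fin d → ℂ) (lam : ℝ) (z : ℂ) : ℂ :=
  haveI := Classical.propDecidable (∃ k : Fin d, z ∈ cone v k)
  if h : ∃ k : Fin d, z ∈ cone v k then -(lam : ℂ) * z + (1 + (lam : ℂ)) * v h.choose
  else z

/-- A point is non-singular if its whole forward orbit stays in the union of the open
cones, i.e. never meets the singular set. -/
def NonSingular {d : ℕ} (v : Fin d → ℂ) (lam : ℝ) (z : ℂ) : Prop :=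
  ∀ n : ℕ, (billiardMap v lam)^[n] z ∈ ⋃ k : Fin d, cone v k

/-- The ω-limit set of the forward orbit of `z` under `f`. -/
def omegaSet (f : ℂ → ℂ) (z : ℂ) : Set ℂ :=
  ⋂ m : ℕ, closure ((fun n : ℕ => f^[n] z) '' {n | m ≤ n})

/-- The outer billiard map with contraction is asymptotically periodic: it has finitely
many periodic orbits (equivalently, periodic points) and the ω-limit set of every
non-singular point is a periodic orbit. -/
def AsymptoticallyPeriodic {d : ℕ} (v : Fin d → ℂ) (lam : ℝ) : Prop :=
  {z : ℂ | NonSingular v lam z ∧ ∃ p : ℕ, 1 ≤ p ∧ (billiardMap v lam)^[p] z = z}.Finite ∧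
  ∀ z : ℂ, NonSingular v lam z → ∃ w : ℂ, NonSingular v lam w ∧
    (∃ p : ℕ, 1 ≤ p ∧ (billiardMap v lam)^[p] w = w) ∧
    omegaSet (billiardMap v lam) z = Set.range fun n : ℕ => (billiardMap v lam)^[n] w

/-- The `ε`-neighbourhood `Δ_ε = B_ε(P') × (λ'-ε, λ'+ε)` of `(P', λ')`. -/
def Delta {d : ℕ} (v' : Fin d → ℂ) (l' ε : ℝ) : Set ((Fin d → ℂ) × ℝ) :=
  Metric.ball v' ε ×ˢ Set.Ioo (l' - ε) (l' + ε)

/-- `a_ε = λ' + ε`. -/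
def aEps (l' ε : ℝ) : ℝ := l' + ε

/-- `b_ε = sup {‖P‖ : P ∈ B_ε(P')}` (sup-norm of the vertex tuple). -/
def bEps {d : ℕ} (v' : Fin d → ℂ) (ε : ℝ) : ℝ :=
  sSup ((fun w : Fin d → ℂ => ‖w‖) '' Metric.ball v' ε)

/-- `r_ε = b_ε (1+a_ε)/(1-a_ε)²`. -/
def rEps {d : ℕ} (v' : Fin d → ℂ) (l' ε : ℝ) : ℝ :=
  bEps v' ε * (1 + aEps l' ε) / (1 - aEps l' ε) ^ 2

/-- `K_ε`: the closed disc of radius `r_ε` centred at the origin. -/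
def Keps {d : ℕ} (v' : Fin d → ℂ) (l' ε : ℝ) : Set ℂ :=
  Metric.closedBall (0 : ℂ) (rEps v' l' ε)

/-- `(i 0, …, i (n-1))` is an admissible itinerary of order `n` of `T_{w,lam}`, the
cones being restricted to `K_ε`: the corresponding intersection
`A_{i_0} ∩ T⁻¹(A_{i_1}) ∩ ⋯ ∩ T^{-(n-1)}(A_{i_{n-1}})` is non-empty. -/
def Admissible {d : ℕ} (v' : Fin d → ℂ) (l' ε : ℝ) (w : Fin d → ℂ) (lam : ℝ)
    {n : ℕ} (i : Fin n → Fin d) : Prop :=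
  ∃ z : ℂ, ∀ j : Fin n, (billiardMap w lam)^[(j : ℕ)] z ∈ cone w (i j) ∩ Keps v' l' ε

/-- `I_n^ε`: the itineraries of order `n` admissible for some `(P, λ) ∈ Δ_ε`. -/
def ItinSet {d : ℕ} (v' : Fin d → ℂ) (l' ε : ℝ) (n : ℕ) : Set (Fin n → Fin d) :=
  {i | ∃ q ∈ Delta v' l' ε, Admissible v' l' ε q.1 q.2 i}

/-- `H(P, λ, i) = (1+λ) ∑_{j=0}^{n-1} (-λ)^{n-j-1} v_{i_j}`. -/
def Hpt {d : ℕ} (w : Fin d → ℂ) (lam : ℝ) {n : ℕ} (i : Fin n → Fin d) : ℂ :=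
  (1 + (lam : ℂ)) * ∑ j : Fin n, (-(lam : ℂ)) ^ (n - (j : ℕ) - 1) * w (i j)

/-- The limit set `Λ_ε(P,λ) = ⋂_{m ≥ 1} closure (⋃_{n ≥ m} {H(P,λ,i) : i ∈ I_n^ε})`. -/
def LamSet {d : ℕ} (v' : Fin d → ℂ) (l' ε : ℝ) (w : Fin d → ℂ) (lam : ℝ) : Set ℂ :=
  ⋂ m : ℕ, ⋂ (_ : 1 ≤ m),
    closure {z : ℂ | ∃ n : ℕ, m ≤ n ∧ ∃ i ∈ ItinSet v' l' ε n, Hpt w lam i = z}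

/-- `ω(P,λ)`: the union of the ω-limit sets of all non-singular points. -/
def omegaUnion {d : ℕ} (w : Fin d → ℂ) (lam : ℝ) : Set ℂ :=
  ⋃ z : ℂ, ⋃ (_ : NonSingular w lam z), omegaSet (billiardMap w lam) z

/-- `P` is in general position: every pair of distinct lines extending sides and
diagonals of `P` (i.e. lines through two distinct vertices) meets in exactly one point. -/
def GeneralPosition {d : ℕ} (v : Fin d → ℂ) : Prop :=
  ∀ i j k l : Fin d, v i ≠ v j → v k ≠ v l →
    affineSpan ℝ ({v i, v j} : Set ℂ) ≠ affineSpan ℝ ({v k, v l} : Set ℂ) →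
    ∃! z : ℂ, z ∈ affineSpan ℝ ({v i, v j} : Set ℂ) ∧
      z ∈ affineSpan ℝ ({v k, v l} : Set ℂ)

open Polynomial in
theorem aux_poly {a R M : ℝ} (ha : 0 < a) (haR : a < R) (s : Finset ℝ) (hs : ∀ x ∈ s, 0 < x ∧ x < a) :
    ∀ h : ℂ[X], (∀ x ∈ s, h.eval (x : ℂ) = 0) → (∀ z : ℂ, ‖z‖ = R → ‖h.eval z‖ ≤ M) →
      ‖h.eval 0‖ ≤ (a / R) ^ s.card * M := by
  have hR : 0 < R := ha.trans haR
  induction s using Finset.induction_on with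
  | empty =>
    intro h _ hM
    have := Complex.norm_le_of_forall_mem_frontier_norm_le (f := fun z => h.eval z) (U := Metric.ball 0 R) (C := M)
      Metric.isBounded_ball (h.differentiable.diffContOnCl) (by
        intro z hz
        rw [frontier_ball (0:ℂ) hR.ne'] at hz
        exact hM z (by simpa using hz)) (z := 0) (subset_closure (by simpa using hR))
    simpa using this
  | insert x s hx ih =>
    intro h h0 hM
    obtain ⟨q, rfl⟩ := Polynomial.dvd_iff_isRoot.2 (h0 x (Finset.mem_insert_self _ _))
    have hxx := hs x (Finset.mem_insert_self _ _)
    have hRC : (R : ℂ) ≠ 0 := by exact_mod_cast hR.ne'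
    have key := ih (fun y hy => hs y (Finset.mem_insert_of_mem hy))
      (q * (C (R : ℂ) - C ((x / R : ℝ) : ℂ) * X)) (by
        intro y hy
        have h1 := h0 y (Finset.mem_insert_of_mem hy)
        have hne : (y : ℂ) - x ≠ 0 := by
          rw [sub_ne_zero]; intro e
          have : y = x := by exact_mod_cast e
          exact hx (this ▸ hy)
        simp only [eval_mul, eval_sub, eval_X, eval_C] at h1 ⊢
        rcases mul_eq_zero.1 h1 with h2 | h2
        · exact absurd h2 hne
        · rw [h2, zero_mul]) (by
        intro z hz
        have h1 := hM z hz
        simp only [eval_mul, eval_sub, eval_X, eval_C, norm_mul] at h1 ⊢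
        have : ‖(R : ℂ) - ((x / R : ℝ) : ℂ) * z‖ = ‖z - x‖ := by
          have hz2 : z.re ^ 2 + z.im ^ 2 = R ^ 2 := by
            rw [← hz, ← Complex.normSq_eq_norm_sq, Complex.normSq_apply]; ring
          rw [← sq_eq_sq₀ (norm_nonneg _) (norm_nonneg _), ← Complex.normSq_eq_norm_sq, ← Complex.normSq_eq_norm_sq,
            Complex.normSq_apply, Complex.normSq_apply]
          simp
          field_simp
          linear_combination (x ^ 2 - R ^ 2) * hz2
        rw [this, mul_comm]; exact h1)
    rw [Finset.card_insert_of_notMem hx]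
    simp only [eval_mul, eval_sub, eval_X, eval_C, norm_mul, mul_zero, sub_zero, zero_sub, norm_neg, Complex.norm_real, Real.norm_eq_abs, abs_of_pos hR, abs_of_pos hxx.1] at key ⊢
    have hpos : 0 ≤ (a / R) := by positivity
    calc x * ‖eval 0 q‖ ≤ a * ‖eval 0 q‖ := by gcongr; exact hxx.2.le
      _ = (a / R) * (‖eval 0 q‖ * R) := by field_simp
      _ ≤ (a / R) * ((a / R) ^ s.card * M) := by gcongr
      _ = _ := by ring

open Polynomial in
theorem aux_interp {a : ℝ} (ha : 0 < a) (ha1 : a < 1) {k n : ℕ} (hn : 1 ≤ n) (b : ℕ → ℝ) (hb : ∀ s, |b s| ≤ 1)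
    (hb0 : |b 0| = 1) {δ η : ℝ} (hδ : 0 < δ) (hδ1 : δ ≤ 1) (hη : 0 < η) (s : Finset ℝ) (hs : ∀ x ∈ s, 0 < x ∧ x < a)
    (hcard : s.card = k) (hsep : ∀ x ∈ s, ∀ y ∈ s, x ≠ y → δ ≤ |x - y|)
    (hf : ∀ x ∈ s, |∑ t ∈ Finset.range n, b t * x ^ t| < η)
    (hk : (a / ((1 + a) / 2)) ^ k * (1 / (1 - (1 + a) / 2)) ≤ 1 / 4) : 1 / 4 ≤ k * η * (2 / δ) ^ k := by
  set R := (1 + a) / 2 with hR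
  have haR : a < R := by rw [hR]; linarith
  have hR1 : R < 1 := by rw [hR]; linarith
  have hR0 : 0 < R := ha.trans haR
  set f : ℂ[X] := ∑ t ∈ Finset.range n, C (b t : ℂ) * X ^ t with hfdef
  have hfe : ∀ z : ℂ, f.eval z = ∑ t ∈ Finset.range n, (b t : ℂ) * z ^ t := by
    intro z; simp [hfdef, eval_finsetSum]
  have hfx : ∀ x ∈ s, ‖f.eval (x : ℂ)‖ ≤ η := by
    intro x hx
    rw [hfe]
    have : ∑ t ∈ Finset.range n, (b t : ℂ) * (x : ℂ) ^ t = ((∑ t ∈ Finset.range n, b t * x ^ t : ℝ) : ℂ) := by push_cast; rfl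
    rw [this, Complex.norm_real]; exact (hf x hx).le
  set p : ℂ[X] := Lagrange.interpolate s (fun x : ℝ => (x : ℂ)) (fun x => f.eval (x : ℂ)) with hp
  have hinj : Set.InjOn (fun x : ℝ => (x : ℂ)) s := fun x _ y _ h => Complex.ofReal_injective h
  have h2δ : 1 ≤ 2 / δ := by rw [le_div_iff₀ hδ]; linarith
  have hpb : ∀ z : ℂ, ‖z‖ ≤ 1 → ‖p.eval z‖ ≤ k * η * (2 / δ) ^ k := by
    intro z hz
    rw [hp, Lagrange.interpolate_apply, eval_finsetSum]
    calc _ ≤ ∑ x ∈ s, η * (2 / δ) ^ k := by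
          refine norm_sum_le_of_le _ fun x hx => ?_
          rw [eval_mul, norm_mul, eval_C]
          refine mul_le_mul (hfx x hx) ?_ (norm_nonneg _) hη.le
          rw [Lagrange.basis, eval_prod, norm_prod]
          calc _ ≤ ∏ y ∈ s.erase x, (2 / δ) := by
                refine Finset.prod_le_prod (fun _ _ => norm_nonneg _) fun y hy => ?_
                have hy' := Finset.mem_erase.1 hy
                have h1 := hsep x hx y hy'.2 hy'.1.symm
                simp only [Lagrange.basisDivisor, eval_mul, eval_C, eval_sub, eval_X, norm_mul, norm_inv]
                have h2 : ‖(x : ℂ) - y‖ = |x - y| := by rw [← Complex.ofReal_sub, Complex.norm_real, Real.norm_eq_abs]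
                have h3 : ‖z - y‖ ≤ 2 := by
                  refine (norm_sub_le _ _).trans ?_
                  rw [Complex.norm_real, Real.norm_eq_abs, abs_of_pos (hs y hy'.2).1]
                  have := (hs y hy'.2).2
                  linarith
                rw [h2, div_eq_inv_mul]
                gcongr
            _ = (2 / δ) ^ (s.erase x).card := by rw [Finset.prod_const]
            _ ≤ (2 / δ) ^ k := pow_le_pow_right₀ h2δ (hcard ▸ Finset.card_erase_le)
      _ = _ := by rw [Finset.sum_const, hcard, nsmul_eq_mul]; ring
  set W := k * η * (2 / δ) ^ k with hW
  have key := aux_poly (M := 1 / (1 - R) + W) ha haR s hs (f - p) (by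
      intro x hx
      rw [eval_sub, hp, Lagrange.eval_interpolate_at_node (v := fun x : ℝ => (x : ℂ)) _ hinj hx, sub_self]) (by
      intro z hz
      rw [eval_sub]
      refine (norm_sub_le _ _).trans (add_le_add ?_ (hpb z (by linarith)))
      rw [hfe]
      calc _ ≤ ∑ t ∈ Finset.range n, R ^ t := by
            refine norm_sum_le_of_le _ fun t _ => ?_
            rw [norm_mul, norm_pow, hz, Complex.norm_real, Real.norm_eq_abs]
            have := pow_nonneg hR0.le t
            nlinarith [hb t]
        _ ≤ 1 / (1 - R) := by
            rw [one_div, ← tsum_geometric_of_lt_one hR0.le hR1]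
            exact (summable_geometric_of_lt_one hR0.le hR1).sum_le_tsum _ (fun t _ => pow_nonneg hR0.le t))
  rw [hcard] at key
  have hf0 : ‖f.eval 0‖ = 1 := by
    rw [hfe, Finset.sum_eq_single_of_mem 0 (Finset.mem_range.2 hn)]
    · simpa using hb0
    · intro t _ ht; simp [ht]
  have h1 : ‖f.eval 0‖ ≤ ‖(f - p).eval 0‖ + ‖p.eval 0‖ := by
    have := norm_add_le ((f - p).eval 0) (p.eval 0)
    simpa using this
  have h2 := hpb 0 (by simp)
  have hW0 : 0 ≤ W := by positivity
  have h3 : (a / R) ^ k ≤ 1 := pow_le_one₀ (by positivity) (by rw [div_le_one hR0]; exact haR.le)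
  nlinarith

theorem aux_sep {E : Set ℝ} {δ : ℝ} (hδ : 0 < δ) {k : ℕ} (hE : ENNReal.ofReal (k * (2 * δ)) < volume E) :
    ∀ m ≤ k, ∃ s : Finset ℝ, (∀ x ∈ s, x ∈ E) ∧ s.card = m ∧ ∀ x ∈ s, ∀ y ∈ s, x ≠ y → δ ≤ |x - y| := by
  intro m
  induction m with
  | zero => intro _; exact ⟨∅, by simp⟩
  | succ m ih =>
    intro hm
    obtain ⟨s, hsE, hc, hsep⟩ := ih (by omega)
    have hv : volume (⋃ x ∈ s, Metric.ball x δ) < volume E := by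
      refine lt_of_le_of_lt ?_ hE
      refine (measure_biUnion_finset_le _ _).trans ?_
      simp only [Real.volume_ball, Finset.sum_const, hc, nsmul_eq_mul]
      rw [← ENNReal.ofReal_natCast, ← ENNReal.ofReal_mul (by positivity)]
      apply ENNReal.ofReal_le_ofReal
      have : (m : ℝ) ≤ k := by exact_mod_cast (by omega : m ≤ k)
      gcongr
    have : ¬ E ⊆ ⋃ x ∈ s, Metric.ball x δ := fun h => absurd (measure_mono h) (not_le.2 hv)
    obtain ⟨y, hyE, hy⟩ := Set.not_subset.1 this
    have hy' : ∀ x ∈ s, δ ≤ |y - x| := by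
      intro x hx
      by_contra hlt
      exact hy (Set.mem_biUnion hx (by simpa [Real.dist_eq] using hlt))
    have hys : y ∉ s := fun h => by have := hy' y h; simp at this; linarith
    refine ⟨insert y s, ?_, by rw [Finset.card_insert_of_notMem hys, hc], ?_⟩
    · intro x hx
      rcases Finset.mem_insert.1 hx with rfl | h
      exacts [hyE, hsE x h]
    · intro x hx z hz hne
      rcases Finset.mem_insert.1 hx with rfl | h <;> rcases Finset.mem_insert.1 hz with rfl | h'
      · exact absurd rfl hne
      · exact hy' z h'
      · rw [abs_sub_comm]; exact hy' x h
      · exact hsep x h z h' hne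

theorem aux_sublevel {a : ℝ} (ha : 0 < a) (ha1 : a < 1) : ∃ k : ℕ, 1 ≤ k ∧ ∃ C : ℝ, 0 < C ∧
    ∀ (n : ℕ) (b : ℕ → ℝ) (η : ℝ), 1 ≤ n → (∀ s, |b s| ≤ 1) → |b 0| = 1 → 0 < η →
      volume {x ∈ Set.Ioo 0 a | |∑ t ∈ Finset.range n, b t * x ^ t| < η} ≤ ENNReal.ofReal (C * η ^ ((k : ℝ)⁻¹)) := by
  have h0 : Tendsto (fun k : ℕ => (a / ((1 + a) / 2)) ^ k * (1 / (1 - (1 + a) / 2))) atTop (nhds (0 * (1 / (1 - (1 + a) / 2)))) := by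
    apply Tendsto.mul_const
    apply tendsto_pow_atTop_nhds_zero_of_lt_one (by positivity)
    rw [div_lt_one (by positivity)]; linarith
  rw [zero_mul] at h0
  obtain ⟨k, hk, hk1⟩ := ((h0.eventually_le_const (by norm_num : (0:ℝ) < 1 / 4)).and (eventually_ge_atTop 1)).exists
  have hkp : (0:ℝ) < k := by exact_mod_cast hk1
  refine ⟨k, hk1, k * (2 * (2 * (8 * k) ^ ((k : ℝ)⁻¹))), by positivity, ?_⟩
  intro n b η hn hb hb0 hη
  set δ := 2 * (8 * k * η) ^ ((k : ℝ)⁻¹) with hδ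
  have hδ0 : 0 < δ := by positivity
  have e : k * (2 * (2 * (8 * k) ^ ((k : ℝ)⁻¹))) * η ^ ((k : ℝ)⁻¹) = k * (2 * δ) := by
    rw [hδ, Real.mul_rpow (by positivity) hη.le]; ring
  rw [e]
  by_contra hcon
  rw [not_le] at hcon
  have hδ1 : δ ≤ 1 := by
    by_contra h1
    rw [not_le] at h1
    have : volume {x ∈ Set.Ioo 0 a | |∑ t ∈ Finset.range n, b t * x ^ t| < η} ≤ ENNReal.ofReal (k * (2 * δ)) := by
      refine (measure_mono (Set.sep_subset _ _)).trans ?_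
      rw [Real.volume_Ioo]
      apply ENNReal.ofReal_le_ofReal
      have : (1:ℝ) ≤ k := by exact_mod_cast hk1
      nlinarith
    exact absurd hcon (not_lt.2 this)
  obtain ⟨s, hsE, hc, hsep⟩ := aux_sep hδ0 hcon k le_rfl
  have := aux_interp ha ha1 hn b hb hb0 hδ0 hδ1 hη s (fun x hx => (hsE x hx).1) hc hsep (fun x hx => (hsE x hx).2) hk
  have h2 : (2 / δ) ^ k = (8 * k * η)⁻¹ := by
    rw [hδ, div_mul_eq_div_div, div_self (by norm_num), one_div, inv_pow, ← Real.rpow_natCast, ← Real.rpow_mul (by positivity), inv_mul_cancel₀ hkp.ne', Real.rpow_one]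
  rw [h2] at this
  have h3 : k * η * (8 * k * η)⁻¹ = 1 / 8 := by field_simp
  rw [h3] at this
  norm_num at this
theorem cone_unique {d : ℕ} {v : Fin d → ℂ} {k l : Fin d} {z : ℂ} (hk : z ∈ cone v k) (hl : z ∈ cone v l) : k = l := by
  by_contra h
  have h1 := hk l (Ne.symm h)
  have h2 := hl k h
  unfold cross at h1 h2
  linarith

theorem billiard_cone {d : ℕ} {v : Fin d → ℂ} {lam : ℝ} {k : Fin d} {z : ℂ} (hk : z ∈ cone v k) :
    billiardMap v lam z = -(lam : ℂ) * z + (1 + (lam : ℂ)) * v k := by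
  have h : ∃ k : Fin d, z ∈ cone v k := ⟨k, hk⟩
  unfold billiardMap
  rw [dif_pos h, cone_unique h.choose_spec hk]

theorem cross_abs_le (z w : ℂ) : |cross z w| ≤ ‖z‖ * ‖w‖ := by
  have : cross z w = ((starRingEnd ℂ) z * w).im := by simp [cross]; ring
  rw [this]
  refine (Complex.abs_im_le_norm _).trans ?_
  simp

/-- Two steps of the dynamics along the cones `j`, `j+1`. -/
theorem aux_two_step {d : ℕ} {w : Fin d → ℂ} {lam : ℝ} (h0 : 0 < lam) (h1 : lam < 1) {j j' q : Fin d}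
    (hjj : j' ≠ j) (hqj : q ≠ j) {z0 z1 z2 : ℂ} {k1 k2 : Fin d}
    (hz0 : z0 ∈ cone w j) (hz1 : z1 ∈ cone w k1) (hz2 : z2 ∈ cone w k2)
    (hk1 : k1 = j ∨ k1 = j') (hk2 : k2 = j ∨ k2 = j')
    (e1 : z1 = billiardMap w lam z0) (e2 : z2 = billiardMap w lam z1) {c : ℝ} (hc : 0 < c)
    (hcq : c ≤ cross (w j' - w j) (w q - w j)) :
    k2 = j ∧ cross (w q - w j) (z2 - w j) ≤ cross (w q - w j) (z0 - w j) - c := by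
  rw [billiard_cone hz0] at e1
  have a0 := hz0 j' hjj
  have hk1' : k1 = j' := by
    rcases hk1 with rfl | h
    · have a1 := hz1 j' hjj
      rw [e1] at a1
      simp [cross] at a0 a1
      exfalso
      nlinarith
    · exact h
  subst hk1'
  rw [billiard_cone hz1, e1] at e2
  have hk2' : k2 = j := by
    rcases hk2 with h | rfl
    · exact h
    · have a2 := hz2 j (Ne.symm hjj)
      rw [e2] at a2
      simp [cross] at a0 a2
      exfalso
      nlinarith [mul_pos (mul_pos h0 h0) (sub_pos.2 a0)]
  refine ⟨hk2', ?_⟩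
  have b0 := hz0 q hqj
  rw [e2]
  simp [cross] at b0 hcq ⊢
  nlinarith [mul_pos (sub_pos.2 h1) (sub_pos.2 b0), mul_pos h0 (mul_pos (sub_pos.2 h1) (sub_pos.2 b0)),
    mul_pos h0 (lt_of_lt_of_le hc hcq)]

theorem aux_itin {d : ℕ} {w : Fin d → ℂ} {lam : ℝ} (h0 : 0 < lam) (h1 : lam < 1) {j j' q : Fin d}
    (hjj : j' ≠ j) (hqj : q ≠ j) {c M : ℝ} (hc : 0 < c)
    (hcq : c ≤ cross (w j' - w j) (w q - w j)) (z : ℕ → ℂ) (κ : ℕ → Fin d) {m : ℕ} (hm : M ≤ m * c)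
    (hz : ∀ t < 2 * m + 2, z t ∈ cone w (κ t)) (hs : ∀ t < 2 * m + 2, z (t + 1) = billiardMap w lam (z t))
    (hκ : ∀ t < 2 * m + 2, κ t = j ∨ κ t = j')
    (hM : ∀ t < 2 * m + 2, cross (w q - w j) (z t - w j) ≤ M) : False := by
  have main : ∀ t0, κ t0 = j → t0 ≤ 1 → False := by
    intro t0 ht0 hle
    have ind : ∀ p ≤ m, κ (t0 + 2 * p) = j ∧ cross (w q - w j) (z (t0 + 2 * p) - w j) ≤ M - p * c := by
      intro p
      induction p with
      | zero => intro _; exact ⟨ht0, by simpa using hM t0 (by omega)⟩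
      | succ p ih =>
        intro hp
        obtain ⟨i1, i2⟩ := ih (by omega)
        have A := hz (t0 + 2 * p) (by omega)
        rw [i1] at A
        have := aux_two_step h0 h1 hjj hqj A (hz (t0 + 2 * p + 1) (by omega)) (hz (t0 + 2 * p + 1 + 1) (by omega))
          (hκ _ (by omega)) (hκ _ (by omega)) (hs _ (by omega)) (hs _ (by omega)) hc hcq
        refine ⟨this.1, ?_⟩
        have h2 := this.2
        push_cast
        change cross (w q - w j) (z (t0 + 2 * p + 1 + 1) - w j) ≤ _
        linarith
    obtain ⟨i1, i2⟩ := ind m le_rfl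
    have A := hz (t0 + 2 * m) (by omega)
    rw [i1] at A
    have b0 := A q hqj
    have : cross (w q - w j) (z (t0 + 2 * m) - w j) = cross (w j - z (t0 + 2 * m)) (w q - z (t0 + 2 * m)) := by
      simp [cross]; ring
    linarith
  rcases hκ 0 (by omega) with h | h
  · exact main 0 h (by omega)
  · rcases hκ 1 (by omega) with h' | h'
    · exact main 1 h' (by omega)
    · have A0 := hz 0 (by omega)
      have A1 := hz 1 (by omega)
      rw [h] at A0
      rw [h', hs 0 (by omega), billiard_cone A0] at A1
      have a0 := A0 j (Ne.symm hjj)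
      have a1 := A1 j (Ne.symm hjj)
      simp [cross] at a0 a1
      nlinarith

theorem aux_exists_index {d : ℕ} {vP : Fin d → ℂ} {lP ε : ℝ} (hl0 : 0 < lP - ε) (hl1 : lP + ε < 1)
    {c B : ℝ} (hc : 0 < c) (hB : ∀ w ∈ Metric.ball vP ε, ∀ l, ‖w l‖ ≤ B) (hB0 : 0 ≤ B) :
    ∃ S : ℕ, ∀ n, S ≤ n → ∀ i ∈ ItinSet vP lP ε n, ∀ j j' q : Fin d, j' ≠ j → q ≠ j →
      (∀ w ∈ Metric.ball vP ε, c ≤ cross (w j' - w j) (w q - w j)) →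
      ∃ t : Fin n, n ≤ t + S ∧ i t ≠ j ∧ i t ≠ j' := by
  set r := rEps vP lP ε
  set M := (2 * B) * (|r| + B) with hM
  obtain ⟨m, hm⟩ := exists_nat_ge (M / c)
  rw [div_le_iff₀ hc] at hm
  refine ⟨2 * m + 2, ?_⟩
  intro n hn i ⟨⟨w, lam⟩, ⟨hw, hlam⟩, z, hz⟩ j j' q hjj hqj hcq
  by_contra hcon
  push Not at hcon
  have hd : 0 < n := by omega
  set κ : ℕ → Fin d := fun t => if h : n - (2 * m + 2) + t < n then i ⟨n - (2 * m + 2) + t, h⟩ else j with hκ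
  have hκ' : ∀ t (h : t < 2 * m + 2), κ t = i ⟨n - (2 * m + 2) + t, by omega⟩ := by
    intro t h; rw [hκ]; exact dif_pos (by omega)
  have hlam' : lP - ε < lam ∧ lam < lP + ε := hlam
  refine aux_itin (w := w) (lam := lam) (by linarith) (by linarith) hjj hqj hc (hcq w hw)
    (fun t => (billiardMap w lam)^[n - (2 * m + 2) + t] z) κ hm ?_ ?_ ?_ ?_
  · intro t ht
    rw [hκ' t ht]; exact (hz ⟨n - (2 * m + 2) + t, by omega⟩).1
  · intro t ht
    change (billiardMap w lam)^[(n - (2 * m + 2) + t) + 1] z = _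
    rw [Function.iterate_succ_apply']
  · intro t ht
    rw [hκ' t ht]
    by_cases h : i ⟨n - (2 * m + 2) + t, by omega⟩ = j
    · exact Or.inl h
    · exact Or.inr (hcon _ (by simp; omega) h)
  · intro t ht
    have hK := (hz ⟨n - (2 * m + 2) + t, by omega⟩).2
    simp only [Keps, Metric.mem_closedBall, dist_zero_right] at hK
    refine (le_abs_self _).trans ((cross_abs_le _ _).trans ?_)
    have h1 := hB w hw q
    have h2 := hB w hw j
    have h3 := norm_sub_le (w q) (w j)
    have h4 := norm_sub_le ((billiardMap w lam)^[n - (2 * m + 2) + t] z) (w j)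
    have h5 := le_abs_self r
    rw [hM]
    exact mul_le_mul (by linarith) (by linarith) (norm_nonneg _) (by linarith)
theorem aux_strip {e : ℂ} (he : e ≠ 0) {c η : ℝ} (hη : 0 < η) (hc : η ≤ |c|) (κ ρ ε : ℝ) (hε : 0 < ε) (z0 : ℂ) :
    volume {z : ℂ | z ∈ Metric.ball z0 ε ∧ |c * cross e z + κ| ≤ ‖e‖ * ρ} ≤ ENNReal.ofReal (4 * ε * (ρ / η)) := by
  have hne : 0 < ‖e‖ := norm_pos_iff.2 he
  have hc0 : c ≠ 0 := by
    rintro rfl; simp at hc; linarith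
  set u : Circle := ⟨(starRingEnd ℂ) e / ‖e‖, by
    rw [Submonoid.unitSphere, Submonoid.mem_mk]
    simp [he]⟩ with hu
  have huc : (u : ℂ) = (starRingEnd ℂ) e / ‖e‖ := rfl
  have hcr : ∀ z, cross e z = ‖e‖ * ((u : ℂ) * z).im := by
    intro z
    rw [huc]
    have h1 : ((starRingEnd ℂ) e / (‖e‖ : ℂ) * z) = ((starRingEnd ℂ) e * z) / ((‖e‖ : ℝ) : ℂ) := by ring
    rw [h1, Complex.div_ofReal_im]
    field_simp
    simp [cross]; ring
  set w0 := (u : ℂ) * z0 with hw0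
  set y0 := - (κ / (c * ‖e‖)) with hy0
  have hsub : {z : ℂ | z ∈ Metric.ball z0 ε ∧ |c * cross e z + κ| ≤ ‖e‖ * ρ} ⊆
      (rotation u) ⁻¹' (Complex.measurableEquivRealProd ⁻¹' (Set.Icc (w0.re - ε) (w0.re + ε) ×ˢ Set.Icc (y0 - ρ / η) (y0 + ρ / η))) := by
    rintro z ⟨hz, h⟩
    simp only [Set.mem_preimage, rotation_apply, Complex.measurableEquivRealProd_apply, Set.mem_prod]
    constructor
    · have h1 : |((u : ℂ) * z).re - w0.re| ≤ ε := by
        rw [hw0, ← Complex.sub_re, ← mul_sub]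
        refine (Complex.abs_re_le_norm _).trans ?_
        rw [norm_mul, Circle.norm_coe, one_mul]
        rw [Metric.mem_ball, dist_eq_norm] at hz
        exact hz.le
      rw [abs_le] at h1
      constructor <;> linarith
    · rw [hcr] at h
      have h1 : |((u : ℂ) * z).im - y0| ≤ ρ / η := by
        have e1 : c * (‖e‖ * ((u : ℂ) * z).im) + κ = c * ‖e‖ * (((u : ℂ) * z).im - y0) := by
          rw [hy0]; field_simp; ring
        rw [e1, abs_mul, abs_mul, abs_of_pos hne] at h
        rw [le_div_iff₀ hη]
        have h2 : |c| * |((u : ℂ) * z).im - y0| ≤ ρ := by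
          have : ‖e‖ * (|c| * |((u : ℂ) * z).im - y0|) ≤ ‖e‖ * ρ := by linarith
          exact le_of_mul_le_mul_left this hne
        have := abs_nonneg (((u : ℂ) * z).im - y0)
        nlinarith
      rw [abs_le] at h1
      constructor <;> linarith
  refine (measure_mono hsub).trans ?_
  rw [(rotation u).measurePreserving.measure_preimage (Complex.measurableEquivRealProd.measurable (measurableSet_Icc.prod measurableSet_Icc)).nullMeasurableSet,
    Complex.volume_preserving_equiv_real_prod.measure_preimage (measurableSet_Icc.prod measurableSet_Icc).nullMeasurableSet,
    Measure.volume_eq_prod, Measure.prod_prod, Real.volume_Icc, Real.volume_Icc, ← ENNReal.ofReal_mul (by linarith)]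
  apply ENNReal.ofReal_le_ofReal
  apply le_of_eq
  ring

theorem aux_fubini {d : ℕ} (vP : Fin d → ℂ) {ε : ℝ} (hε : 0 < ε) (m : Fin d) {A : Set (Fin d → ℂ)} (hA : MeasurableSet A)
    (hsub : A ⊆ Metric.ball vP ε) (K : ENNReal) (hK : ∀ v, (∃ z, Function.update v m z ∈ A) → volume {z | Function.update v m z ∈ A} ≤ K) :
    volume A ≤ K / volume (Metric.ball (vP m) ε) * volume (Metric.ball vP ε) := by
  set vb := volume (Metric.ball (vP m) ε) with hvb
  have hvb0 : vb ≠ 0 := (Metric.measure_ball_pos volume _ hε).ne'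
  have hvbt : vb ≠ ⊤ := measure_ball_lt_top.ne
  have hBm : MeasurableSet (Metric.ball vP ε) := Metric.isOpen_ball.measurableSet
  have key := lintegral_le_of_lmarginal_le (μ := fun _ : Fin d => (volume : Measure ℂ)) {m}
    (f := A.indicator 1) (g := (Metric.ball vP ε).indicator (fun _ => K / vb))
    (measurable_one.indicator hA) (measurable_const.indicator hBm) (by
      rw [lmarginal_singleton, lmarginal_singleton]
      intro v
      have hu : Measurable (fun z : ℂ => Function.update v m z) := measurable_update v
      have e1 : ∫⁻ z, A.indicator (1 : (Fin d → ℂ) → ENNReal) (Function.update v m z) = volume {z | Function.update v m z ∈ A} := by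
        have h7 := lintegral_indicator_one (μ := (volume : Measure ℂ)) (hu hA)
        exact h7
      simp only []
      rw [e1]
      by_cases h : ∃ z, Function.update v m z ∈ A
      · refine (hK v h).trans ?_
        obtain ⟨z1, hz1⟩ := h
        have hz1 := hsub hz1
        rw [Metric.mem_ball, dist_pi_lt_iff hε] at hz1
        calc K = ∫⁻ z, (Metric.ball (vP m) ε).indicator (fun _ => K / vb) z := by
              rw [lintegral_indicator_const Metric.isOpen_ball.measurableSet, ENNReal.div_mul_cancel hvb0 hvbt]
          _ ≤ _ := by
              refine lintegral_mono fun z => ?_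
              by_cases hz : z ∈ Metric.ball (vP m) ε
              swap
              · rw [Set.indicator_of_notMem hz]; exact bot_le
              rw [Set.indicator_of_mem hz, Set.indicator_of_mem]
              rw [Metric.mem_ball, dist_pi_lt_iff hε]
              intro l
              by_cases hl : l = m
              · subst hl; simpa using hz
              · have := hz1 l
                rw [Function.update_of_ne hl] at this ⊢
                exact this
      · have : {z | Function.update v m z ∈ A} = ∅ := by
          ext z; simpa using fun hz => h ⟨z, hz⟩
        rw [this]; simp)
  rw [lintegral_indicator_const hBm, lintegral_indicator_one hA] at key
  exact key

/-- coefficient of `v m` in `H / (1 + λ)`. -/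
def Gco {d n : ℕ} (i : Fin n → Fin d) (m : Fin d) (x : ℝ) : ℝ :=
  ∑ t : Fin n, if i t = m then (-x) ^ (n - (t : ℕ) - 1) else 0

theorem Hpt_split {d n : ℕ} (i : Fin n → Fin d) (m : Fin d) (w : Fin d → ℂ) (x : ℝ) :
    Hpt w x i = (((1 + x) * Gco i m x : ℝ) : ℂ) * w m +
      (1 + (x : ℂ)) * ∑ t : Fin n, if i t = m then 0 else (-(x : ℂ)) ^ (n - (t : ℕ) - 1) * w (i t) := by
  unfold Hpt Gco
  push_cast
  rw [mul_assoc, ← mul_add, Finset.sum_mul, ← Finset.sum_add_distrib]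
  congr 1
  refine Finset.sum_congr rfl fun t _ => ?_
  split_ifs with h
  · rw [h]; simp
  · simp

theorem Gco_cont {d n : ℕ} (i : Fin n → Fin d) (m : Fin d) : Continuous (Gco i m) := by
  unfold Gco
  refine continuous_finsetSum _ fun t _ => ?_
  split_ifs <;> fun_prop

theorem aux_part2 {d n : ℕ} (vP : Fin d → ℂ) {lP ε : ℝ} (hε : 0 < ε) (hl0 : 0 < lP - ε) (i : Fin n → Fin d)
    {j j' m : Fin d} (hmj : m ≠ j) (hmj' : m ≠ j') (hne : ∀ w ∈ Metric.ball vP ε, w j' ≠ w j) {η ρ : ℝ} (hη : 0 < η) :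
    volume {q : (Fin d → ℂ) × ℝ | q ∈ Delta vP lP ε ∧ η ≤ |Gco i m q.2| ∧
      |cross (q.1 j' - q.1 j) (Hpt q.1 q.2 i - q.1 j)| ≤ ‖q.1 j' - q.1 j‖ * ρ} ≤
    (ENNReal.ofReal (4 * ε * (ρ / η)) / volume (Metric.ball (vP m) ε) * volume (Metric.ball vP ε)) * ENNReal.ofReal (2 * ε) := by
  set A := {q : (Fin d → ℂ) × ℝ | q ∈ Delta vP lP ε ∧ η ≤ |Gco i m q.2| ∧
      |cross (q.1 j' - q.1 j) (Hpt q.1 q.2 i - q.1 j)| ≤ ‖q.1 j' - q.1 j‖ * ρ} with hAdef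
  have hH : Continuous (fun q : (Fin d → ℂ) × ℝ => Hpt q.1 q.2 i) := by
    unfold Hpt; fun_prop
  have hG := Gco_cont i m
  have hA : MeasurableSet A := by
    have m1 : MeasurableSet (Delta vP lP ε) := Metric.isOpen_ball.measurableSet.prod measurableSet_Ioo
    have m2 : MeasurableSet {q : (Fin d → ℂ) × ℝ | η ≤ |Gco i m q.2|} := by
      apply IsClosed.measurableSet
      exact isClosed_le continuous_const (by fun_prop)
    have m3 : MeasurableSet {q : (Fin d → ℂ) × ℝ | |cross (q.1 j' - q.1 j) (Hpt q.1 q.2 i - q.1 j)| ≤ ‖q.1 j' - q.1 j‖ * ρ} := by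
      apply IsClosed.measurableSet
      refine isClosed_le ?_ (by fun_prop)
      unfold cross
      fun_prop
    exact m1.inter (m2.inter m3)
  set Q := (ENNReal.ofReal (4 * ε * (ρ / η)) / volume (Metric.ball (vP m) ε) * volume (Metric.ball vP ε)) with hQ
  rw [Measure.volume_eq_prod, Measure.prod_apply_symm hA]
  calc _ ≤ ∫⁻ x, (Set.Ioo (lP - ε) (lP + ε)).indicator (fun _ => Q) x := by
        refine lintegral_mono fun x => ?_
        by_cases hx : x ∈ Set.Ioo (lP - ε) (lP + ε)
        · rw [Set.indicator_of_mem hx]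
          refine aux_fubini vP hε m (measurable_prodMk_right hA) (fun v hv => hv.1.1) _ ?_
          rintro v ⟨z1, hz1⟩
          have e0 : Function.update v m z1 j' - Function.update v m z1 j ≠ 0 := sub_ne_zero.2 (hne _ hz1.1.1)
          have hGx : η ≤ |Gco i m x| := hz1.2.1
          rw [Function.update_of_ne (Ne.symm hmj), Function.update_of_ne (Ne.symm hmj')] at e0
          have hc : η ≤ |(1 + x) * Gco i m x| := by
            have h1 : 0 < x := by linarith [hx.1]
            rw [abs_mul, abs_of_pos (by linarith : 0 < 1 + x)]
            have := abs_nonneg (Gco i m x)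
            nlinarith
          set rest := (1 + (x : ℂ)) * ∑ t : Fin n, if i t = m then 0 else (-(x : ℂ)) ^ (n - (t : ℕ) - 1) * v (i t) with hrest
          refine (measure_mono ?_).trans (aux_strip e0 hη hc (cross (v j' - v j) (rest - v j)) ρ ε hε (vP m))
          intro z hz
          obtain ⟨h1, -, h3⟩ := hz
          refine ⟨?_, ?_⟩
          · have h1 := h1.1
            simp only [Metric.mem_ball, dist_pi_lt_iff hε] at h1
            have := h1 m
            rw [Metric.mem_ball]
            simpa using this
          · simp only [Function.update_of_ne (Ne.symm hmj), Function.update_of_ne (Ne.symm hmj')] at h3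
            rw [Hpt_split i m] at h3
            have e3 : (1 + (x : ℂ)) * ∑ t : Fin n, (if i t = m then 0 else (-(x : ℂ)) ^ (n - (t : ℕ) - 1) * Function.update v m z (i t)) = rest := by
              rw [hrest]
              congr 1
              refine Finset.sum_congr rfl fun t _ => ?_
              split_ifs with h
              · rfl
              · rw [Function.update_of_ne h]
            rw [e3, Function.update_self] at h3
            convert h3 using 2
            unfold cross
            simp only [Complex.sub_re, Complex.sub_im, Complex.add_re, Complex.add_im, Complex.re_ofReal_mul, Complex.im_ofReal_mul]
            ring
        · have : (fun v : Fin d → ℂ => (v, x)) ⁻¹' A = ∅ := by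
            ext v; simp only [Set.mem_preimage, Set.mem_empty_iff_false, iff_false]
            exact fun h => hx h.1.2
          rw [this]; simp
    _ = Q * ENNReal.ofReal (2 * ε) := by
        rw [lintegral_indicator_const measurableSet_Ioo, Real.volume_Ioo]
        congr 2; ring

theorem aux_part1 {l a : ℝ} (hl : 0 < l) (hl1 : l < 1) (ha : 0 < a) (ha1 : a < 1) (S : ℕ) : ∃ k : ℕ, 1 ≤ k ∧ ∃ C : ℝ, 0 < C ∧
    ∀ (d n : ℕ) (i : Fin n → Fin d) (t : Fin n) (η : ℝ), n ≤ t + S → 0 < η →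
      volume {x ∈ Set.Ioo l a | |Gco i (i t) x| < η} ≤ ENNReal.ofReal (C * η ^ ((k : ℝ)⁻¹)) := by
  obtain ⟨k, hk, C, hC, h⟩ := aux_sublevel ha ha1
  refine ⟨k, hk, C * ((l ^ S)⁻¹) ^ ((k : ℝ)⁻¹), by positivity, ?_⟩
  intro d n i t η hn hη
  set m := i t
  have ht := t.2
  set b : ℕ → ℝ := fun s => if h : s < n then (if i ⟨n - (s + 1), by omega⟩ = m then (-1) ^ s else 0) else 0 with hb
  have hG : ∀ x, Gco i m x = ∑ s ∈ Finset.range n, b s * x ^ s := by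
    intro x
    rw [Finset.sum_range, Gco, ← Equiv.sum_comp Fin.revPerm]
    refine Finset.sum_congr rfl fun s _ => ?_
    have hs := s.2
    have e1 : n - ((Fin.rev s : Fin n) : ℕ) - 1 = s := by rw [Fin.val_rev]; omega
    have e2 : (Fin.rev s) = (⟨n - (s + 1), by omega⟩ : Fin n) := Fin.ext (Fin.val_rev s)
    simp only [Fin.revPerm_apply, hb, hs, dif_pos]
    rw [e1, ← e2]
    split_ifs
    · rw [neg_pow]
    · simp
  have hval : ∀ s, b s = 0 ∨ |b s| = 1 := by
    intro s
    simp only [hb]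
    split_ifs <;> simp
  have hex : ∃ s, b s ≠ 0 := ⟨n - (t + 1), by
    have : (⟨n - (n - ((t:ℕ) + 1) + 1), by omega⟩ : Fin n) = t := Fin.ext (by simp; omega)
    simp only [hb]
    rw [dif_pos (by omega), this, if_pos rfl]
    simp⟩
  classical
  set s0 := Nat.find hex with hs0
  have hs0' : b s0 ≠ 0 := Nat.find_spec hex
  have hmin : ∀ s < s0, b s = 0 := fun s hs => by simpa using Nat.find_min hex hs
  have hle : s0 ≤ n - (t + 1) := Nat.find_min' hex (by
    have : (⟨n - (n - ((t:ℕ) + 1) + 1), by omega⟩ : Fin n) = t := Fin.ext (by simp; omega)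
    simp only [hb]
    rw [dif_pos (by omega), this, if_pos rfl]
    simp)
  have hb1 : ∀ s, |b s| ≤ 1 := by
    intro s
    rcases hval s with h | h
    · rw [h]; simp
    · exact h.le
  have hb01 : |b s0| = 1 := by
    exact (hval s0).resolve_left hs0'
  have hlS : 0 < l ^ S := by positivity
  have hfin := h (n - s0) (fun s => b (s0 + s)) (η * (l ^ S)⁻¹) (by omega) (fun s => hb1 _) hb01 (by positivity)
  rw [Real.mul_rpow hη.le (by positivity)] at hfin
  have e : C * ((l ^ S)⁻¹) ^ ((k : ℝ)⁻¹) * η ^ ((k : ℝ)⁻¹) = C * (η ^ ((k : ℝ)⁻¹) * ((l ^ S)⁻¹) ^ ((k : ℝ)⁻¹)) := by ring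
  rw [e]
  refine (measure_mono ?_).trans hfin
  rintro x ⟨hx, hxη⟩
  have hx0 : 0 < x := hl.trans hx.1
  refine ⟨⟨hx0, hx.2⟩, ?_⟩
  have e2 : Gco i m x = x ^ s0 * ∑ s ∈ Finset.range (n - s0), b (s0 + s) * x ^ s := by
    rw [hG]
    have : n = s0 + (n - s0) := by omega
    conv_lhs => rw [this, Finset.sum_range_add]
    rw [Finset.sum_eq_zero (fun s hs => by rw [hmin s (Finset.mem_range.1 hs), zero_mul]), zero_add, Finset.mul_sum]
    refine Finset.sum_congr rfl fun s _ => ?_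
    rw [pow_add]; ring
  rw [e2, abs_mul, abs_of_pos (by positivity)] at hxη
  rw [← div_eq_mul_inv, lt_div_iff₀ hlS]
  have h3 : l ^ S ≤ x ^ s0 := by
    calc l ^ S ≤ l ^ s0 := pow_le_pow_of_le_one hl.le hl1.le (by omega)
      _ ≤ x ^ s0 := by gcongr; exact hx.1.le
  have := abs_nonneg (∑ s ∈ Finset.range (n - s0), b (s0 + s) * x ^ s)
  nlinarith
theorem aux_eps {d : ℕ} [NeZero d] (vP : Fin d → ℂ) (lP : ℝ) (hconv : IsConvexPolygon vP) (hl : lP ∈ Set.Ioo (0 : ℝ) 1) :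
    ∃ ε : ℝ, 0 < ε ∧ 0 < lP - ε ∧ lP + ε < 1 ∧ ∃ c : ℝ, 0 < c ∧ ∀ w ∈ Metric.ball vP ε,
      ∀ i j : Fin d, j ≠ i → j ≠ i + 1 → c ≤ cross (w (i + 1) - w i) (w j - w i) := by
  have h1 : ∀ᶠ c in nhdsWithin (0 : ℝ) (Set.Ioi 0), ∀ i j : Fin d, j ≠ i → j ≠ i + 1 → c < cross (vP (i + 1) - vP i) (vP j - vP i) := by
    simp only [eventually_all]
    intro i j h h'
    exact nhdsWithin_le_nhds (eventually_lt_nhds (hconv i j h h'))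
  obtain ⟨c, hc, hc0⟩ := (h1.and self_mem_nhdsWithin).exists
  have h2 : ∀ᶠ w in nhds vP, ∀ i j : Fin d, j ≠ i → j ≠ i + 1 → c < cross (w (i + 1) - w i) (w j - w i) := by
    simp only [eventually_all]
    intro i j h h'
    have hcont : Continuous (fun w : Fin d → ℂ => cross (w (i + 1) - w i) (w j - w i)) := by
      unfold cross; fun_prop
    exact hcont.continuousAt.eventually (eventually_gt_nhds (hc i j h h'))
  obtain ⟨ε0, hε0, hb⟩ := Metric.eventually_nhds_iff.1 h2
  have hl0 := hl.1
  have hl1 := hl.2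
  refine ⟨min ε0 (min lP (1 - lP) / 2), ?_, ?_, ?_, c, hc0, ?_⟩
  · have : 0 < 1 - lP := by linarith
    positivity
  · have h3 := min_le_right ε0 (min lP (1 - lP) / 2)
    have h4 := min_le_left lP (1 - lP)
    linarith
  · have h3 := min_le_right ε0 (min lP (1 - lP) / 2)
    have h4 := min_le_right lP (1 - lP)
    linarith
  · intro w hw i j h h'
    exact (hb (lt_of_lt_of_le hw (min_le_left _ _)) i j h h').le

theorem aux_infDist {p q z : ℂ} {ρ : ℝ} (h : Metric.infDist z (affineSpan ℝ ({p, q} : Set ℂ) : Set ℂ) < ρ) :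
    |cross (q - p) (z - p)| ≤ ‖q - p‖ * ρ := by
  rw [Metric.infDist_lt_iff ⟨p, left_mem_affineSpan_pair ℝ p q⟩] at h
  obtain ⟨y, hy, hd⟩ := h
  obtain ⟨t, rfl⟩ := mem_affineSpan_pair_iff_exists_lineMap_eq.1 hy
  rw [dist_eq_norm] at hd
  have e : cross (q - p) (z - p) = cross (q - p) (z - AffineMap.lineMap p q t) := by
    simp [cross, AffineMap.lineMap_apply]; ring
  rw [e]
  refine (cross_abs_le _ _).trans ?_
  gcongr

/-- Main measure estimate: if `P'` is in general position, there exist `ε > 0` and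
`k ≥ 1`, `N > 0`, `C > 0` such that for every `n > N`, `i ∈ I_n^ε` and side index `j`,
the measure of the set of `(P,λ) ∈ Δ_ε` with `H(P,λ,i)` within distance
`ρ_n = 2 r_ε a_ε^n` of the line `L_j(P)` through `v_j, v_{j+1}` is at most
`C n^(2(k+1)) ρ_n^(1/k)`. -/
theorem measure_Omega_estimate (d : ℕ) [NeZero d] (hd : 3 ≤ d) (vP : Fin d → ℂ)
    (lP : ℝ) (hconv : IsConvexPolygon vP) (hgen : GeneralPosition vP)
    (hl : lP ∈ Set.Ioo (0 : ℝ) 1) :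
    ∃ ε : ℝ, 0 < ε ∧ 0 < lP - ε ∧ lP + ε < 1 ∧
      (∀ w : Fin d → ℂ, ‖w - vP‖ < ε → IsConvexPolygon w) ∧
      ∃ k : ℕ, 1 ≤ k ∧ ∃ N : ℕ, 0 < N ∧ ∃ C : ℝ, 0 < C ∧
        ∀ n : ℕ, N < n → ∀ i ∈ ItinSet vP lP ε n, ∀ j : Fin d,
          volume {q ∈ Delta vP lP ε |
              Metric.infDist (Hpt q.1 q.2 i)
                  (affineSpan ℝ ({q.1 j, q.1 (j + 1)} : Set ℂ) : Set ℂ) <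
                2 * rEps vP lP ε * aEps lP ε ^ n} ≤
            ENNReal.ofReal (C * (n : ℝ) ^ (2 * (k + 1)) *
              (2 * rEps vP lP ε * aEps lP ε ^ n) ^ ((k : ℝ)⁻¹)) := by
  obtain ⟨ε, hε, hl0, hl1, c, hc, hcw⟩ := aux_eps vP lP hconv hl
  refine ⟨ε, hε, hl0, hl1, fun w hw i j h h' => lt_of_lt_of_le hc (hcw w (by rwa [Metric.mem_ball, dist_eq_norm]) i j h h'), ?_⟩
  have hB : ∀ w ∈ Metric.ball vP ε, ∀ l, ‖w l‖ ≤ ‖vP‖ + ε := by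
    intro w hw l
    rw [Metric.mem_ball, dist_eq_norm] at hw
    have h1 := norm_le_pi_norm w l
    have h2 := norm_sub_norm_le w vP
    linarith
  obtain ⟨S, hS⟩ := aux_exists_index hl0 hl1 hc hB (by positivity)
  have ha0 : 0 < lP + ε := by linarith
  obtain ⟨k, hk, C, hC, hpart1⟩ := aux_part1 hl0 (by linarith : lP - ε < 1) ha0 hl1 S
  have hr : 0 ≤ rEps vP lP ε := by
    have hb : 0 ≤ bEps vP ε := by
      apply Real.sSup_nonneg
      rintro x ⟨w, -, rfl⟩
      exact norm_nonneg w
    unfold rEps aEps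
    positivity
  have hlim : Tendsto (fun n : ℕ => 2 * rEps vP lP ε * aEps lP ε ^ n) atTop (nhds (2 * rEps vP lP ε * 0)) := by
    apply Tendsto.const_mul
    exact tendsto_pow_atTop_nhds_zero_of_lt_one ha0.le hl1
  rw [mul_zero] at hlim
  obtain ⟨N0, hN0⟩ := eventually_atTop.1 (hlim.eventually_le_const (by norm_num : (0:ℝ) < 1))
  set VB := (volume (Metric.ball vP ε)).toReal with hVB
  have hVBt : volume (Metric.ball vP ε) ≠ ⊤ := measure_ball_lt_top.ne
  have hVBe : volume (Metric.ball vP ε) = ENNReal.ofReal VB := (ENNReal.ofReal_toReal hVBt).symm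
  set Vb := (volume (Metric.ball (0 : ℂ) ε)).toReal with hVb
  have hVbe : ∀ m, volume (Metric.ball (vP m) ε) = ENNReal.ofReal Vb := by
    intro m
    rw [hVb, ENNReal.ofReal_toReal measure_ball_lt_top.ne, Measure.addHaar_ball_center]
  have hVb0 : 0 < Vb := ENNReal.toReal_pos (Metric.measure_ball_pos volume _ hε).ne' measure_ball_lt_top.ne
  have hVB0 : 0 < VB := ENNReal.toReal_pos (Metric.measure_ball_pos volume _ hε).ne' hVBt
  have hk2 : (1:ℝ) ≤ k := by exact_mod_cast hk
  refine ⟨2 * k, by omega, S + N0 + 1, by omega, VB * C + 4 * ε / Vb * VB * (2 * ε), by positivity, ?_⟩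
  intro n hn i hi j
  set ρ := 2 * rEps vP lP ε * aEps lP ε ^ n with hρ
  have hρ1 : ρ ≤ 1 := hN0 n (by omega)
  have hρ0 : 0 ≤ ρ := by
    have : 0 < aEps lP ε := ha0
    positivity
  rcases hρ0.eq_or_lt with h0 | hρp
  · rw [← h0]
    have : {q ∈ Delta vP lP ε | Metric.infDist (Hpt q.1 q.2 i)
                  (affineSpan ℝ ({q.1 j, q.1 (j + 1)} : Set ℂ) : Set ℂ) < 0} = ∅ := by
      ext q
      simp only [Set.mem_ofPred_eq, Set.mem_empty_iff_false, iff_false, not_and, not_lt]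
      exact fun _ => Metric.infDist_nonneg
    rw [this]; simp
  have hjj : j + 1 ≠ j := by
    intro h
    have h1 : (1 : Fin d) = 0 := by simpa using h
    have h2 := congrArg Fin.val h1
    have h3 : ((1 : Fin d) : ℕ) = 1 % d := rfl
    rw [h3, Nat.mod_eq_of_lt (by omega)] at h2
    simp at h2
  obtain ⟨q0, hq0, hq0'⟩ : ∃ q0 : Fin d, q0 ≠ j ∧ q0 ≠ j + 1 := by
    have hcard : ({j, j + 1} : Finset (Fin d)).card < (Finset.univ : Finset (Fin d)).card := by
      rw [Finset.card_univ, Fintype.card_fin]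
      exact lt_of_le_of_lt Finset.card_le_two (by omega)
    obtain ⟨x, -, hx⟩ := Finset.exists_mem_notMem_of_card_lt_card hcard
    refine ⟨x, ?_, ?_⟩ <;> rintro rfl <;> simp at hx
  obtain ⟨t, ht, htj, htj'⟩ := hS n (by omega) i hi j (j + 1) q0 hjj hq0 (fun w hw => hcw w hw j q0 hq0 hq0')
  set η := ρ ^ ((2:ℝ)⁻¹) with hη
  have hη0 : 0 < η := by positivity
  have hne : ∀ w ∈ Metric.ball vP ε, w (j + 1) ≠ w j := by
    intro w hw h
    have := hcw w hw j q0 hq0 hq0'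
    rw [h] at this
    simp [cross] at this
    linarith
  have P1 := hpart1 d n i t η ht hη0
  have P2 := aux_part2 vP hε hl0 i htj htj' hne hη0 (ρ := ρ)
  have hsub : {q ∈ Delta vP lP ε | Metric.infDist (Hpt q.1 q.2 i)
                  (affineSpan ℝ ({q.1 j, q.1 (j + 1)} : Set ℂ) : Set ℂ) < ρ} ⊆
      (Metric.ball vP ε ×ˢ {x ∈ Set.Ioo (lP - ε) (lP + ε) | |Gco i (i t) x| < η}) ∪
      {q : (Fin d → ℂ) × ℝ | q ∈ Delta vP lP ε ∧ η ≤ |Gco i (i t) q.2| ∧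
      |cross (q.1 (j + 1) - q.1 j) (Hpt q.1 q.2 i - q.1 j)| ≤ ‖q.1 (j + 1) - q.1 j‖ * ρ} := by
    rintro q ⟨hq, hd⟩
    by_cases h : η ≤ |Gco i (i t) q.2|
    · exact Or.inr ⟨hq, h, aux_infDist hd⟩
    · exact Or.inl ⟨hq.1, hq.2, not_le.1 h⟩
  have e1 : η ^ ((k:ℝ)⁻¹) = ρ ^ (((2 * k : ℕ) : ℝ)⁻¹) := by
    rw [hη, ← Real.rpow_mul hρ0]
    congr 1
    push_cast
    rw [mul_inv]
  have e2 : ρ / η ≤ ρ ^ (((2 * k : ℕ) : ℝ)⁻¹) := by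
    have : ρ / η = ρ ^ ((2:ℝ)⁻¹) := by
      rw [hη, div_eq_iff hη0.ne', ← Real.rpow_add hρp]
      norm_num
    rw [this]
    apply Real.rpow_le_rpow_of_exponent_ge hρp hρ1
    push_cast
    apply inv_anti₀ (by norm_num)
    linarith
  refine (measure_mono hsub).trans ((measure_union_le _ _).trans ?_)
  rw [Measure.volume_eq_prod, Measure.prod_prod, ← Measure.volume_eq_prod, hVBe]
  refine (add_le_add (mul_le_mul_right P1 _) P2).trans ?_
  rw [hVBe, hVbe, ← ENNReal.ofReal_div_of_pos hVb0, ← ENNReal.ofReal_mul hVB0.le,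
    ← ENNReal.ofReal_mul (by positivity), ← ENNReal.ofReal_mul (by positivity),
    ← ENNReal.ofReal_add (by positivity) (by positivity)]
  apply ENNReal.ofReal_le_ofReal
  rw [e1]
  set X := ρ ^ (((2 * k : ℕ) : ℝ)⁻¹) with hX
  have hX0 : 0 ≤ X := by positivity
  have hn1 : (1:ℝ) ≤ (n:ℝ) ^ (2 * (2 * k + 1)) := one_le_pow₀ (by exact_mod_cast (by omega : 1 ≤ n))
  calc VB * (C * X) + 4 * ε * (ρ / η) / Vb * VB * (2 * ε) ≤ VB * (C * X) + 4 * ε * X / Vb * VB * (2 * ε) := by gcongr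
    _ = (VB * C + 4 * ε / Vb * VB * (2 * ε)) * 1 * X := by ring
    _ ≤ _ := by gcongr
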